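/- Fix a strongly connected directed weighted graph G = (V, E, W) with n nodes, a stationary distribution π > 0, and ε > 0 such that P^ε_{G,π} is nonempty. Then for every P ∈ P^ε_{G,π}, both the truncated and the conditional return time entropy converge to the return time entropy as the truncation accuracy vanishes: lim_{η → 0⁺} J_trunc,η(P) = J(P) and lim_{η → 0⁺} J_cond,η(P) = J(P). -/

import Mathlib

open scoped BigOperators
open Real Filter

/-- The set of Markov chains `ε`-conforming to a directed graph with adjacency
relation `Adj` and stationary distribution `pivec`. -/
def Conf {n : ℕ} (Adj : Fin n → Fin n → Prop) (pivec : Fin n → ℝ) (ε : ℝ) :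
    Set (Matrix (Fin n) (Fin n) ℝ) :=
  {P | (∀ i j, Adj i j → ε ≤ P i j) ∧ (∀ i j, ¬ Adj i j → P i j = 0) ∧
    (∀ i, ∑ j, P i j = 1) ∧ (∀ j, ∑ i, pivec i * P i j = pivec j)}

/-- The first hitting time probabilities `F_k(i,j)` for a chain `P` with travel
times `W`: `F_k(i,j) = p_{ij}·1{k = w_{ij}} + Σ_{h≠j} p_{ih} F_{k−w_{ih}}(h,j)`
for `k ≥ 1`, and `F_k = 0` for `k ≤ 0`. -/
def IsHittingProb {n : ℕ} (P : Matrix (Fin n) (Fin n) ℝ)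
    (W : Matrix (Fin n) (Fin n) ℕ) (F : ℤ → Fin n → Fin n → ℝ) : Prop :=
  (∀ k : ℤ, k ≤ 0 → ∀ i j, F k i j = 0) ∧
    ∀ k : ℤ, 1 ≤ k → ∀ i j,
      F k i j = (if k = (W i j : ℤ) then P i j else 0) +
        ∑ h : Fin n, if h = j then 0 else P i h * F (k - (W i h : ℤ)) h j

/-! The return time to `j` has finite mean: if `π` is stationary, `U i` is the (truncated) mean time
of reaching `j` from `i` in at least one step, and `V` agrees with `U` except that `V j = 0`, then
conditioning on the first step gives `U ≤ c + P V`, where `c i` is the mean duration of a step from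
`i`. Pairing with `π` cancels `V` and leaves Kac's bound `π j * U j ≤ π ⬝ c`. A law on `ℕ` with
finite mean has total mass one and finite entropy, because `-x log x ≤ k x + exp (-k)`. Both
truncated entropies are then partial sums of convergent series: renormalising by the mass `S`
changes the partial entropy `H` to `H / S + log S`, which has the same limit since `S → 1`. -/

open Finset Matrix
open scoped Topology

section Entropy

lemma negMulLog_le_mul_add_exp_neg {x : ℝ} (hx : 0 ≤ x) (t : ℝ) :
    negMulLog x ≤ t * x + exp (-t) := by
  rcases hx.eq_or_lt with rfl | hx
  · simp [exp_nonneg]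
  · have hlog : -t - log x ≤ exp (-t) / x - 1 := by
      have := log_le_sub_one_of_pos (div_pos (exp_pos (-t)) hx)
      rwa [log_div (exp_ne_zero _) hx.ne', log_exp] at this
    calc negMulLog x = t * x + x * (-t - log x) := by rw [negMulLog]; ring
      _ ≤ t * x + x * (exp (-t) / x - 1) := by gcongr
      _ = t * x + exp (-t) - x := by field_simp; ring
      _ ≤ t * x + exp (-t) := sub_le_self _ hx.le

lemma summable_negMulLog_of_summable_nat_mul {f : ℕ → ℝ} (hf₀ : ∀ k, 0 ≤ f k)
    (hf₁ : ∀ k, f k ≤ 1) (hf : Summable fun k : ℕ => k * f k) :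
    Summable fun k => negMulLog (f k) :=
  .of_nonneg_of_le (fun k => negMulLog_nonneg (hf₀ k) (hf₁ k))
    (fun k => negMulLog_le_mul_add_exp_neg (hf₀ k) k) (hf.add summable_exp_neg_nat)

lemma sum_negMulLog_div {ι : Type*} (s : Finset ι) (f : ι → ℝ) (c : ℝ) :
    ∑ i ∈ s, negMulLog (f i / c) =
      c⁻¹ * ∑ i ∈ s, negMulLog (f i) + (∑ i ∈ s, f i) * negMulLog c⁻¹ := by
  simp only [div_eq_mul_inv, negMulLog_mul, sum_add_distrib, mul_sum, sum_mul]

lemma tendsto_sum_negMulLog_div_sum {ι α : Type*} {l : Filter α} {s : α → Finset ι} {f : ι → ℝ}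
    {H : ℝ} (hf : Tendsto (fun a => ∑ i ∈ s a, f i) l (𝓝 1))
    (hH : Tendsto (fun a => ∑ i ∈ s a, negMulLog (f i)) l (𝓝 H)) :
    Tendsto (fun a => ∑ i ∈ s a, negMulLog (f i / ∑ j ∈ s a, f j)) l (𝓝 H) := by
  have hinv : Tendsto (fun a => (∑ i ∈ s a, f i)⁻¹) l (𝓝 1) := by
    simpa using hf.inv₀ one_ne_zero
  have hlog : Tendsto (fun a => negMulLog (∑ i ∈ s a, f i)⁻¹) l (𝓝 0) := by
    simpa [Function.comp_def] using (continuous_negMulLog.tendsto 1).comp hinv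
  simpa [sum_negMulLog_div] using (hinv.mul hH).add (hf.mul hlog)

end Entropy

section Series

lemma tendsto_sum_Icc_one_of_hasSum {α : Type*} {l : Filter α} {N : α → ℕ}
    (hN : Tendsto N l atTop) {g : ℤ → ℝ} {a : ℝ} (hg : HasSum (fun k : ℕ => g (k + 1)) a) :
    Tendsto (fun x => ∑ k ∈ Icc 1 (N x), g k) l (𝓝 a) := by
  refine (hg.tendsto_sum_nat.comp hN).congr fun x => ?_
  have hshift := sum_Ico_add' (fun k : ℕ => g k) 0 (N x) 1
  rw [zero_add, Ico_add_one_right_eq_Icc, ← range_eq_Ico] at hshift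
  exact_mod_cast hshift

lemma sum_Ico_zero_natCast (g : ℤ → ℝ) (N : ℕ) :
    ∑ k ∈ Ico (0 : ℤ) N, g k = ∑ k ∈ range N, g k := by
  simp [Int.Ico_eq_finset_map]

lemma hasSum_of_summable_sub_sum_range {f : ℕ → ℝ} {c : ℝ}
    (hf : Summable fun N => c - ∑ k ∈ range N, f k) (hf₀ : ∀ k, 0 ≤ f k) : HasSum f c := by
  rw [hasSum_iff_tendsto_nat_of_nonneg hf₀]
  simpa using hf.tendsto_atTop_zero.const_sub c

lemma sum_range_sub_sum_range (f : ℕ → ℝ) (c : ℝ) (K : ℕ) :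
    ∑ N ∈ range K, (c - ∑ k ∈ range N, f k) =
      ∑ k ∈ range K, (k + 1) * f k + K * (c - ∑ k ∈ range K, f k) := by
  induction K with
  | zero => simp
  | succ K ih =>
    simp only [sum_range_succ _ K, ih]
    push_cast
    ring

lemma summable_nat_mul_of_summable_sub_sum_range {f : ℕ → ℝ} {c : ℝ} (hf₀ : ∀ k, 0 ≤ f k)
    (hc : ∀ N, ∑ k ∈ range N, f k ≤ c) (hf : Summable fun N => c - ∑ k ∈ range N, f k) :
    Summable fun k : ℕ => k * f k := by
  refine summable_of_sum_range_le (c := ∑' N, (c - ∑ k ∈ range N, f k))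
    (fun k => mul_nonneg k.cast_nonneg (hf₀ k)) fun K => ?_
  calc ∑ k ∈ range K, k * f k
      ≤ ∑ k ∈ range K, (k + 1) * f k :=
        sum_le_sum fun k _ => mul_le_mul_of_nonneg_right (by simp) (hf₀ k)
    _ ≤ ∑ N ∈ range K, (c - ∑ k ∈ range N, f k) := by
        rw [sum_range_sub_sum_range]
        exact le_add_of_nonneg_right (mul_nonneg K.cast_nonneg (sub_nonneg.2 (hc K)))
    _ ≤ ∑' N, (c - ∑ k ∈ range N, f k) := hf.sum_le_tsum _ fun N _ => sub_nonneg.2 (hc N)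

lemma sum_Ico_zero_sub_natCast_le {g : ℤ → ℝ} (hg₀ : ∀ m, 0 ≤ g m) (hg₁ : ∀ m < 0, g m ≤ 1)
    (K w : ℕ) : ∑ N ∈ Ico (0 : ℤ) K, g (N - w) ≤ w + ∑ N ∈ Ico (0 : ℤ) K, g N := by
  calc ∑ N ∈ Ico (0 : ℤ) K, g (N - w)
      = ∑ N ∈ Ico (-w : ℤ) (K - w), g N := by
        simpa [sub_eq_add_neg] using sum_Ico_add' g 0 K (-w)
    _ ≤ ∑ N ∈ Ico (-w : ℤ) 0 ∪ Ico 0 K, g N := by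
        refine sum_le_sum_of_subset_of_nonneg (fun N => ?_) fun _ _ _ => hg₀ _
        simp only [mem_union, mem_Ico]
        omega
    _ = ∑ N ∈ Ico (-w : ℤ) 0, g N + ∑ N ∈ Ico (0 : ℤ) K, g N :=
        sum_union (Ico_disjoint_Ico_consecutive _ _ _)
    _ ≤ w + ∑ N ∈ Ico (0 : ℤ) K, g N := by
        gcongr
        simpa using sum_le_card_nsmul (Ico (-w : ℤ) 0) g 1 fun m hm => hg₁ m (mem_Ico.1 hm).2

end Series

section Survival

/-- The survival function `N ↦ ℙ(X > N)` of a random time `X ≥ 0` with law `a`. It is defined at all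
integers so that it can be shifted by travel times. -/
noncomputable def survival (a : ℤ → ℝ) (N : ℤ) : ℝ :=
  1 - ∑ k ∈ Ico 0 (N + 1), a k

lemma survival_of_neg (a : ℤ → ℝ) {N : ℤ} (hN : N < 0) : survival a N = 1 := by
  simp [survival, Ico_eq_empty_of_le (show N + 1 ≤ 0 by omega)]

lemma survival_natCast (a : ℤ → ℝ) (N : ℕ) :
    survival a N = 1 - (∑ k ∈ range N, a (k + 1) + a 0) := by
  have := sum_Ico_zero_natCast a (N + 1)
  rw [sum_range_succ'] at this
  exact_mod_cast congrArg (1 - ·) this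

lemma survival_sub_natCast {a : ℤ → ℝ} (ha : ∀ k < 0, a k = 0) (w : ℕ) (N : ℤ) :
    survival a (N - w) = survival (fun k => a (k - w)) N := by
  have hshift : ∑ k ∈ Ico 0 (N + 1), a (k - w) = ∑ k ∈ Ico (-w : ℤ) (N - w + 1), a k := by
    simpa [sub_eq_add_neg, add_right_comm] using sum_Ico_add' a 0 (N + 1) (-w)
  rw [survival, survival, hshift, sub_right_inj]
  refine sum_subset (fun k => ?_) fun k hk hk' => ha k ?_
  all_goals simp only [mem_Ico] at *; omega

lemma survival_sum {ι : Type*} {s : Finset ι} {p : ι → ℝ} (hp : ∑ i ∈ s, p i = 1)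
    (a : ι → ℤ → ℝ) (N : ℤ) :
    survival (fun k => ∑ i ∈ s, p i * a i k) N = ∑ i ∈ s, p i * survival (a i) N := by
  simp only [survival, mul_sub, mul_one, sum_sub_distrib, hp, mul_sum]
  rw [sum_comm]

end Survival

lemma nonneg_of_renewal {ι : Type*} [Fintype ι] {P : Matrix ι ι ℝ} {W : Matrix ι ι ℕ}
    (hP : ∀ i h, 0 ≤ P i h) (hW : ∀ i h, P i h ≠ 0 → 0 < W i h) {X Y : ℤ → ι → ℝ}
    (hX : ∀ k ≤ 0, ∀ i, 0 ≤ X k i) (hXY : ∀ k i, X k i = ∑ h, P i h * Y (k - W i h) h)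
    (hY : ∀ k h, 0 ≤ X k h → 0 ≤ Y k h) (k : ℤ) (i : ι) : 0 ≤ X k i := by
  induction hm : k.toNat using Nat.strong_induction_on generalizing k i with
  | _ m ih =>
    rcases le_or_gt k 0 with hk | hk
    · exact hX k hk i
    · rw [hXY]
      refine sum_nonneg fun h _ => ?_
      by_cases hPih : P i h = 0
      · simp [hPih]
      · have hWih := hW i h hPih
        exact mul_nonneg (hP i h) (hY _ _ (ih _ (by omega) _ _ rfl))

section FirstVisit

variable {ι : Type*} [DecidableEq ι]

/-- The law of the first visit to `j` from `i` when, unlike for `F`, starting at `j` counts as a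
visit at time `0`. It turns the sum over `h ≠ j` in the recursion for `F` into a full sum. -/
def firstVisit (F : ℤ → ι → ι → ℝ) (i j : ι) (k : ℤ) : ℝ :=
  if i = j then if k = 0 then 1 else 0 else F k i j

lemma survival_firstVisit_self (F : ℤ → ι → ι → ℝ) (j : ι) {N : ℤ} (hN : 0 ≤ N) :
    survival (firstVisit F j j) N = 0 := by
  simp [survival, firstVisit, hN]

lemma survival_firstVisit_of_ne (F : ℤ → ι → ι → ℝ) {i j : ι} (hij : i ≠ j) (N : ℤ) :
    survival (firstVisit F i j) N = survival (fun k => F k i j) N := by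
  simp [survival, firstVisit, hij]

lemma survival_firstVisit_nonneg_of_survival_nonneg {F : ℤ → ι → ι → ℝ} {h j : ι} {N : ℤ}
    (hN : 0 ≤ survival (fun k => F k h j) N) : 0 ≤ survival (firstVisit F h j) N := by
  by_cases hj : h = j
  · subst hj
    rcases lt_or_ge N 0 with hN₀ | hN₀
    · simp [survival_of_neg _ hN₀]
    · rw [survival_firstVisit_self F h hN₀]
  · rwa [survival_firstVisit_of_ne F hj]

end FirstVisit

section HittingTimes

variable {n : ℕ} {P : Matrix (Fin n) (Fin n) ℝ} {W : Matrix (Fin n) (Fin n) ℕ}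
  {F : ℤ → Fin n → Fin n → ℝ}

namespace IsHittingProb

lemma firstVisit_of_neg (hF : IsHittingProb P W F) (i j : Fin n) {k : ℤ} (hk : k < 0) :
    firstVisit F i j k = 0 := by
  simp [firstVisit, hk.ne, hF.1 k hk.le]

lemma eq_sum_firstVisit (hF : IsHittingProb P W F) (hW : ∀ i h, P i h ≠ 0 → 0 < W i h)
    (k : ℤ) (i j : Fin n) : F k i j = ∑ h, P i h * firstVisit F h j (k - W i h) := by
  rcases le_or_gt k 0 with hk | hk
  · rw [hF.1 k hk, eq_comm]
    refine sum_eq_zero fun h _ => ?_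
    by_cases hPih : P i h = 0
    · simp [hPih]
    · have hWih := hW i h hPih
      rw [hF.firstVisit_of_neg h j (by omega), mul_zero]
  · have hsplit : ∀ h, P i h * firstVisit F h j (k - W i h) =
        (if h = j then if k = W i j then P i j else 0 else 0) +
          if h = j then 0 else P i h * F (k - W i h) h j := by
      intro h
      by_cases hj : h = j
      · subst hj
        simp [firstVisit, sub_eq_zero]
      · simp [firstVisit, hj]
    simp only [hF.2 k hk, hsplit, sum_add_distrib, sum_ite_eq', mem_univ, if_true]

lemma survival_eq_sum (hF : IsHittingProb P W F) (hP : ∀ i, ∑ h, P i h = 1)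
    (hW : ∀ i h, P i h ≠ 0 → 0 < W i h) (N : ℤ) (i j : Fin n) :
    survival (fun k => F k i j) N = ∑ h, P i h * survival (firstVisit F h j) (N - W i h) := by
  simp only [hF.eq_sum_firstVisit hW _ i j, survival_sum (hP i),
    survival_sub_natCast fun _ hk => hF.firstVisit_of_neg _ j hk]

lemma nonneg (hF : IsHittingProb P W F) (hP : ∀ i h, 0 ≤ P i h)
    (hW : ∀ i h, P i h ≠ 0 → 0 < W i h) (k : ℤ) (i j : Fin n) : 0 ≤ F k i j := by
  refine nonneg_of_renewal hP hW (X := fun k i => F k i j)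
    (Y := fun k h => firstVisit F h j k) (fun k hk i => (hF.1 k hk i j).ge)
    (fun k i => hF.eq_sum_firstVisit hW k i j) (fun _ _ hFk => ?_) k i
  unfold firstVisit
  split_ifs
  exacts [zero_le_one, le_rfl, hFk]

lemma survival_nonneg (hF : IsHittingProb P W F) (hP : P ∈ rowStochastic ℝ (Fin n))
    (hW : ∀ i h, P i h ≠ 0 → 0 < W i h) (N : ℤ) (i j : Fin n) :
    0 ≤ survival (fun k => F k i j) N := by
  refine nonneg_of_renewal hP.1 hW (X := fun N i => survival (fun k => F k i j) N)
    (Y := fun N h => survival (firstVisit F h j) N)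
    (fun N hN i => ?_) (fun N i => hF.survival_eq_sum (sum_row_of_mem_rowStochastic hP) hW N i j)
    (fun _ _ => survival_firstVisit_nonneg_of_survival_nonneg) N i
  have hzero : ∀ k ∈ Ico 0 (N + 1), F k i j = 0 := fun k hk =>
    hF.1 k (by have := (mem_Ico.1 hk).2; omega) i j
  rw [survival, sum_eq_zero hzero, sub_zero]
  exact zero_le_one

lemma sum_survival_le (hF : IsHittingProb P W F) (hP : P ∈ rowStochastic ℝ (Fin n))
    (hW : ∀ i h, P i h ≠ 0 → 0 < W i h) (i j : Fin n) (K : ℕ) :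
    ∑ N ∈ Ico (0 : ℤ) K, survival (fun k => F k i j) N ≤
      ∑ h, P i h * W i h + ∑ h, P i h * ∑ N ∈ Ico (0 : ℤ) K, survival (firstVisit F h j) N := by
  have hnonneg (N : ℤ) (h : Fin n) : 0 ≤ survival (firstVisit F h j) N :=
    survival_firstVisit_nonneg_of_survival_nonneg (hF.survival_nonneg hP hW N h j)
  calc ∑ N ∈ Ico (0 : ℤ) K, survival (fun k => F k i j) N
      = ∑ h, P i h * ∑ N ∈ Ico (0 : ℤ) K, survival (firstVisit F h j) (N - W i h) := by
        simp only [hF.survival_eq_sum (sum_row_of_mem_rowStochastic hP) hW, mul_sum]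
        exact sum_comm
    _ ≤ ∑ h, P i h * (W i h + ∑ N ∈ Ico (0 : ℤ) K, survival (firstVisit F h j) N) :=
        sum_le_sum fun h _ => mul_le_mul_of_nonneg_left
          (sum_Ico_zero_sub_natCast_le (fun N => hnonneg N h)
            (fun N hN => (survival_of_neg _ hN).le) K (W i h)) (hP.1 i h)
    _ = _ := by simp only [mul_add, sum_add_distrib]

lemma mul_sum_survival_le (hF : IsHittingProb P W F) (hP : P ∈ rowStochastic ℝ (Fin n))
    (hW : ∀ i h, P i h ≠ 0 → 0 < W i h) {pivec : Fin n → ℝ} (hpi : ∀ i, 0 ≤ pivec i)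
    (hstat : pivec ᵥ* P = pivec) (j : Fin n) (K : ℕ) :
    pivec j * ∑ N ∈ Ico (0 : ℤ) K, survival (fun k => F k j j) N ≤
      pivec ⬝ᵥ fun i => ∑ h, P i h * (W i h : ℝ) := by
  set c : Fin n → ℝ := fun i => ∑ h, P i h * (W i h : ℝ)
  let U : Fin n → ℝ := fun i => ∑ N ∈ Ico (0 : ℤ) K, survival (fun k => F k i j) N
  let V : Fin n → ℝ := fun h => ∑ N ∈ Ico (0 : ℤ) K, survival (firstVisit F h j) N
  have hUV : U = V + Pi.single j (U j) := by
    ext i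
    by_cases hij : i = j
    · subst hij
      simp only [Pi.add_apply, Pi.single_eq_same, V, right_eq_add]
      exact sum_eq_zero fun N hN => survival_firstVisit_self F i (mem_Ico.1 hN).1
    · simp [U, V, hij, survival_firstVisit_of_ne F hij]
  have hU : U ≤ c + P *ᵥ V := fun i => hF.sum_survival_le hP hW i j K
  have hpair : pivec ⬝ᵥ V + pivec j * U j ≤ pivec ⬝ᵥ c + pivec ⬝ᵥ V :=
    calc pivec ⬝ᵥ V + pivec j * U j = pivec ⬝ᵥ U := by
          conv_rhs => rw [hUV, dotProduct_add, dotProduct_single]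
      _ ≤ pivec ⬝ᵥ (c + P *ᵥ V) := dotProduct_le_dotProduct_of_nonneg_left hU hpi
      _ = pivec ⬝ᵥ c + pivec ⬝ᵥ V := by rw [dotProduct_add, dotProduct_mulVec, hstat]
  linarith

lemma summable_survival (hF : IsHittingProb P W F) (hP : P ∈ rowStochastic ℝ (Fin n))
    (hW : ∀ i h, P i h ≠ 0 → 0 < W i h) {pivec : Fin n → ℝ} (hpi : ∀ i, 0 ≤ pivec i)
    (hstat : pivec ᵥ* P = pivec) {j : Fin n} (hj : 0 < pivec j) :
    Summable fun N : ℕ => survival (fun k => F k j j) N := by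
  refine summable_of_sum_range_le (c := (pivec ⬝ᵥ fun i => ∑ h, P i h * (W i h : ℝ)) / pivec j)
    (fun N => hF.survival_nonneg hP hW N j j) fun K => ?_
  rw [← sum_Ico_zero_natCast (survival fun k => F k j j)]
  exact (le_div_iff₀' hj).2 (hF.mul_sum_survival_le hP hW hpi hstat j K)

lemma survival_eq_one_sub_sum_range (hF : IsHittingProb P W F) (i j : Fin n) (N : ℕ) :
    survival (fun k => F k i j) N = 1 - ∑ k ∈ range N, F (k + 1) i j := by
  rw [survival_natCast, hF.1 0 le_rfl, add_zero]

lemma hasSum_return (hF : IsHittingProb P W F) (hP : P ∈ rowStochastic ℝ (Fin n))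
    (hW : ∀ i h, P i h ≠ 0 → 0 < W i h) {pivec : Fin n → ℝ} (hpi : ∀ i, 0 ≤ pivec i)
    (hstat : pivec ᵥ* P = pivec) {j : Fin n} (hj : 0 < pivec j) :
    HasSum (fun k : ℕ => F (k + 1) j j) 1 := by
  have hsurv := hF.summable_survival hP hW hpi hstat hj
  simp only [hF.survival_eq_one_sub_sum_range] at hsurv
  exact hasSum_of_summable_sub_sum_range hsurv fun k => hF.nonneg hP.1 hW _ j j

lemma summable_nat_mul_return (hF : IsHittingProb P W F) (hP : P ∈ rowStochastic ℝ (Fin n))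
    (hW : ∀ i h, P i h ≠ 0 → 0 < W i h) {pivec : Fin n → ℝ} (hpi : ∀ i, 0 ≤ pivec i)
    (hstat : pivec ᵥ* P = pivec) {j : Fin n} (hj : 0 < pivec j) :
    Summable fun k : ℕ => k * F (k + 1) j j := by
  have hsurv := hF.summable_survival hP hW hpi hstat hj
  simp only [hF.survival_eq_one_sub_sum_range] at hsurv
  have hmass := hF.hasSum_return hP hW hpi hstat hj
  have hnonneg (k : ℕ) : 0 ≤ F (k + 1) j j := hF.nonneg hP.1 hW _ j j
  exact summable_nat_mul_of_summable_sub_sum_range hnonneg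
    (fun N => sum_le_hasSum _ (fun k _ => hnonneg k) hmass) hsurv

lemma summable_negMulLog_return (hF : IsHittingProb P W F) (hP : P ∈ rowStochastic ℝ (Fin n))
    (hW : ∀ i h, P i h ≠ 0 → 0 < W i h) {pivec : Fin n → ℝ} (hpi : ∀ i, 0 ≤ pivec i)
    (hstat : pivec ᵥ* P = pivec) {j : Fin n} (hj : 0 < pivec j) :
    Summable fun k : ℕ => negMulLog (F (k + 1) j j) := by
  have hnonneg (k : ℕ) : 0 ≤ F (k + 1) j j := hF.nonneg hP.1 hW _ j j
  exact summable_negMulLog_of_summable_nat_mul hnonneg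
    (fun k => le_hasSum (hF.hasSum_return hP hW hpi hstat hj) k fun m _ => hnonneg m)
    (hF.summable_nat_mul_return hP hW hpi hstat hj)

end IsHittingProb

end HittingTimes

section ReturnTimeEntropy

variable {ι : Type*} [Fintype ι]

/-- The return time entropy `J`, as a functional of the weights and the hitting probabilities. -/
noncomputable def returnTimeEntropy (pivec : ι → ℝ) (F : ℤ → ι → ι → ℝ) : ℝ :=
  ∑ i, pivec i * ∑' k : ℕ, negMulLog (F (k + 1) i i)

/-- The truncated return time entropy `J_trunc` for an arbitrary duration `N` in place of `N_η`. -/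
noncomputable def truncatedReturnTimeEntropy (pivec : ι → ℝ) (F : ℤ → ι → ι → ℝ) (N : ℕ) :
    ℝ :=
  ∑ i, pivec i * ∑ k ∈ Icc 1 N, negMulLog (F k i i)

/-- The conditional return time entropy `J_cond`, given that the return takes at most `N` time
units, for an arbitrary duration `N` in place of `N_η`. -/
noncomputable def conditionalReturnTimeEntropy (pivec : ι → ℝ) (F : ℤ → ι → ι → ℝ) (N : ℕ) :
    ℝ :=
  ∑ i, pivec i * ∑ k ∈ Icc 1 N, negMulLog (F k i i / ∑ k' ∈ Icc 1 N, F k' i i)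

lemma tendsto_sum_mul_of_pos {α : Type*} {l : Filter α} {p : ι → ℝ} {u : α → ι → ℝ}
    {v : ι → ℝ} (hp : ∀ i, 0 ≤ p i) (h : ∀ i, 0 < p i → Tendsto (u · i) l (𝓝 (v i))) :
    Tendsto (fun a => ∑ i, p i * u a i) l (𝓝 (∑ i, p i * v i)) := by
  refine tendsto_finsetSum _ fun i _ => ?_
  rcases (hp i).eq_or_lt with hi | hi
  · simpa [← hi] using tendsto_const_nhds
  · exact (h i hi).const_mul _

theorem truncated_and_conditional_entropy_limits_general {n : ℕ}
    {P : Matrix (Fin n) (Fin n) ℝ} {W : Matrix (Fin n) (Fin n) ℕ} {F : ℤ → Fin n → Fin n → ℝ}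
    {pivec : Fin n → ℝ} (hF : IsHittingProb P W F) (hP : P ∈ rowStochastic ℝ (Fin n))
    (hW : ∀ i h, P i h ≠ 0 → 0 < W i h) (hpi : ∀ i, 0 ≤ pivec i) (hstat : pivec ᵥ* P = pivec)
    {α : Type*} {l : Filter α} {N : α → ℕ} (hN : Tendsto N l atTop) :
    Tendsto (fun a => truncatedReturnTimeEntropy pivec F (N a)) l
        (𝓝 (returnTimeEntropy pivec F)) ∧
      Tendsto (fun a => conditionalReturnTimeEntropy pivec F (N a)) l
        (𝓝 (returnTimeEntropy pivec F)) := by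
  have hentropy (i : Fin n) (hi : 0 < pivec i) :
      Tendsto (fun a => ∑ k ∈ Icc 1 (N a), negMulLog (F k i i)) l
        (𝓝 (∑' k : ℕ, negMulLog (F (k + 1) i i))) :=
    tendsto_sum_Icc_one_of_hasSum (g := fun k => negMulLog (F k i i)) hN
      (hF.summable_negMulLog_return hP hW hpi hstat hi).hasSum
  have hmass (i : Fin n) (hi : 0 < pivec i) :
      Tendsto (fun a => ∑ k ∈ Icc 1 (N a), F k i i) l (𝓝 1) :=
    tendsto_sum_Icc_one_of_hasSum (g := fun k => F k i i) hN
      (hF.hasSum_return hP hW hpi hstat hi)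
  exact ⟨tendsto_sum_mul_of_pos hpi hentropy, tendsto_sum_mul_of_pos hpi fun i hi =>
    tendsto_sum_negMulLog_div_sum (hmass i hi) (hentropy i hi)⟩

end ReturnTimeEntropy

section Conforming

variable {n : ℕ} {Adj : Fin n → Fin n → Prop} {W : Matrix (Fin n) (Fin n) ℕ}
  {P : Matrix (Fin n) (Fin n) ℝ} {pivec : Fin n → ℝ} {ε : ℝ}

lemma mem_rowStochastic_of_mem_conf (hε : 0 ≤ ε) (hP : P ∈ Conf Adj pivec ε) :
    P ∈ rowStochastic ℝ (Fin n) := by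
  refine mem_rowStochastic_iff_sum.2 ⟨fun i j => ?_, hP.2.2.1⟩
  by_cases hij : Adj i j
  · exact hε.trans (hP.1 i j hij)
  · exact (hP.2.1 i j hij).ge

lemma vecMul_eq_of_mem_conf (hP : P ∈ Conf Adj pivec ε) : pivec ᵥ* P = pivec :=
  funext hP.2.2.2

lemma weight_pos_of_mem_conf (hW : ∀ i j, Adj i j → 1 ≤ W i j) (hP : P ∈ Conf Adj pivec ε)
    (i j : Fin n) (hPij : P i j ≠ 0) : 0 < W i j :=
  hW i j (not_imp_comm.1 (hP.2.1 i j) hPij)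

lemma sup_weight_pos {ι : Type*} [Fintype ι] [Nonempty ι] {P : Matrix ι ι ℝ}
    {W : Matrix ι ι ℕ} (hP : ∀ i, ∑ j, P i j = 1) (hW : ∀ i j, P i j ≠ 0 → 0 < W i j) :
    0 < univ.sup fun p : ι × ι => W p.1 p.2 := by
  obtain ⟨i⟩ := ‹Nonempty ι›
  obtain ⟨j, -, hij⟩ := exists_ne_zero_of_sum_ne_zero ((hP i).trans_ne one_ne_zero)
  exact (hW i j hij).trans_le (le_sup (f := fun p : ι × ι => W p.1 p.2) (mem_univ (i, j)))

lemma tendsto_ceil_div_mul_sub_one {c d : ℝ} (hc : 0 < c) (hd : 0 < d) :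
    Tendsto (fun η : ℝ => ⌈c / (η * d)⌉₊ - 1) (𝓝[>] 0) atTop := by
  have hscale : Tendsto (fun η : ℝ => c / d * η⁻¹) (𝓝[>] 0) atTop :=
    tendsto_inv_nhdsGT_zero.const_mul_atTop (div_pos hc hd)
  refine (tendsto_sub_atTop_nat 1).comp (tendsto_nat_ceil_atTop.comp (hscale.congr fun η => ?_))
  rw [← div_eq_mul_inv, div_div, mul_comm]

end Conforming

/-- as the truncation accuracy `η` tends to `0⁺` (with duration
`N_η = ⌈w_max/(η π_min)⌉ − 1`), both the truncated return time entropy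
`J_trunc,η(P)` and the conditional return time entropy `J_cond,η(P)` converge
to the return time entropy `J(P)`, for every `P` in the `ε`-conforming set. -/
theorem truncated_and_conditional_entropy_limits {n : ℕ}
    (Adj : Fin n → Fin n → Prop) (W : Matrix (Fin n) (Fin n) ℕ)
    (pivec : Fin n → ℝ) (ε : ℝ)
    (hconn : ∀ i j, Relation.ReflTransGen Adj i j)
    (hW1 : ∀ i j, Adj i j → 1 ≤ W i j)
    (hW0 : ∀ i j, ¬ Adj i j → W i j = 0)
    (hpi : ∀ i, 0 < pivec i) (hpisum : ∑ i, pivec i = 1)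
    (hε : 0 < ε) (hne : (Conf Adj pivec ε).Nonempty)
    (F : Matrix (Fin n) (Fin n) ℝ → ℤ → Fin n → Fin n → ℝ)
    (hF : ∀ P ∈ Conf Adj pivec ε, IsHittingProb P W (F P))
    (wmax : ℕ) (hwmax : wmax = Finset.univ.sup (fun p : Fin n × Fin n => W p.1 p.2))
    (pimin : ℝ) (hpimin : IsLeast (Set.range pivec) pimin)
    (Nfun : ℝ → ℕ) (hNfun : ∀ η : ℝ, Nfun η = ⌈(wmax : ℝ) / (η * pimin)⌉₊ - 1) :
    ∀ P ∈ Conf Adj pivec ε,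
      Tendsto
        (fun η : ℝ => ∑ i : Fin n, pivec i *
          ∑ k ∈ Finset.Icc 1 (Nfun η), Real.negMulLog (F P (k : ℤ) i i))
        (nhdsWithin 0 (Set.Ioi (0 : ℝ)))
        (nhds (∑ i : Fin n, pivec i *
          ∑' k : ℕ, Real.negMulLog (F P ((k : ℤ) + 1) i i))) ∧
      Tendsto
        (fun η : ℝ => ∑ i : Fin n, pivec i *
          ∑ k ∈ Finset.Icc 1 (Nfun η),
            Real.negMulLog (F P (k : ℤ) i i / ∑ k' ∈ Finset.Icc 1 (Nfun η), F P (k' : ℤ) i i))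
        (nhdsWithin 0 (Set.Ioi (0 : ℝ)))
        (nhds (∑ i : Fin n, pivec i *
          ∑' k : ℕ, Real.negMulLog (F P ((k : ℤ) + 1) i i))) := by
  intro P hP
  have hstoch := mem_rowStochastic_of_mem_conf hε.le hP
  have hweight := weight_pos_of_mem_conf hW1 hP
  obtain ⟨i, rfl⟩ := hpimin.1
  have : Nonempty (Fin n) := ⟨i⟩
  have hwpos : 0 < wmax := hwmax ▸ sup_weight_pos hP.2.2.1 hweight
  obtain rfl : Nfun = _ := funext hNfun
  exact truncated_and_conditional_entropy_limits_general (hF P hP) hstoch hweight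
    (fun j => (hpi j).le) (vecMul_eq_of_mem_conf hP)
    (tendsto_ceil_div_mul_sub_one (Nat.cast_pos.2 hwpos) (hpi i))
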